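/- arXiv:2509.03700 — 10 statements merged into one kernel-verified Lean document; each statement's English description precedes it below -/
import Mathlib

section
/- Let R be a ring, V an R-module, N : V → V an R-linear endomorphism that is nilpotent, and k an integer. Then there exists a monodromy filtration of N on V centered at k, i.e. a finite increasing ℤ-indexed filtration M on V such that N maps M i into M (i−2) for every i, and such that for every natural number i the map induced by the i-th iterate N^i from the graded piece M (k+i) / M (k+i−1) to the graded piece M (k−i) / M (k−i−1) is an isomorphism. -/
/-- `IsMonodromyFiltration N k M` says that `M` is a monodromy filtration of the nilpotent
endomorphism `N` centered at `k`: a finite increasing `ℤ`-indexed filtration by submodules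
such that `N` maps `M i` into `M (i - 2)` and, for every natural number `i`, the map induced
by `N ^ i` from the graded piece `M (k + i) / M (k + i - 1)` to `M (k - i) / M (k - i - 1)`
is an isomorphism. -/
structure IsMonodromyFiltration {R V : Type*} [Ring R] [AddCommGroup V] [Module R V]
    (N : V →ₗ[R] V) (k : ℤ) (M : ℤ → Submodule R V) : Prop where
  /-- The filtration is increasing. -/
  mono : Monotone M
  /-- The filtration is exhausted below. -/
  eventually_bot : ∃ a : ℤ, ∀ i ≤ a, M i = ⊥
  /-- The filtration is exhausted above. -/
  eventually_top : ∃ b : ℤ, ∀ i, b ≤ i → M i = ⊤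
  /-- `N` maps `M i` into `M (i - 2)`. -/
  map_le : ∀ i : ℤ, (M i).map N ≤ M (i - 2)
  /-- For each `i : ℕ`, the map induced by `N ^ i` on graded pieces
  `M (k + i) / M (k + i - 1) → M (k - i) / M (k - i - 1)` is an isomorphism. -/
  graded_iso : ∀ (i : ℕ) (h1 : ∀ x ∈ M (k + i), (N ^ i) x ∈ M (k - i))
      (h2 : (M (k + i - 1)).comap (M (k + i)).subtype ≤
        ((M (k - i - 1)).comap (M (k - i)).subtype).comap ((N ^ i).restrict h1)),
      Function.Bijective
        (Submodule.mapQ ((M (k + i - 1)).comap (M (k + i)).subtype)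
          ((M (k - i - 1)).comap (M (k - i)).subtype) ((N ^ i).restrict h1) h2)

/-- Relative version, by induction on `d`: a filtration between `A` and `B` when
`N ^ (d + 1)` maps `B` into `A`. -/
theorem monodromy_aux {R V : Type*} [Ring R] [AddCommGroup V] [Module R V]
    (N : V →ₗ[R] V) (d : ℕ) : ∀ (A B : Submodule R V), A ≤ B →
    (∀ x ∈ A, N x ∈ A) → (∀ x ∈ B, N x ∈ B) → (∀ x ∈ B, (N ^ (d + 1)) x ∈ A) →
    ∃ M : ℤ → Submodule R V, Monotone M ∧ (∀ i : ℤ, (d : ℤ) ≤ i → M i = B) ∧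
      (∀ i : ℤ, i ≤ -(d : ℤ) - 1 → M i = A) ∧
      (∀ i : ℤ, ∀ x ∈ M i, N x ∈ M (i - 2)) ∧
      (∀ i : ℕ, ∀ x ∈ M i, (N ^ i) x ∈ M (-(i : ℤ) - 1) → x ∈ M ((i : ℤ) - 1)) ∧
      (∀ i : ℕ, ∀ y ∈ M (-(i : ℤ)), ∃ x ∈ M i, y - (N ^ i) x ∈ M (-(i : ℤ) - 1)) := by
  induction d with
  | zero =>
    intro A B hAB hA hB hN
    have hN1 : ∀ x ∈ B, N x ∈ A := by simpa using hN
    have hge : ∀ i : ℤ, 0 ≤ i → (if 0 ≤ i then B else A) = B := fun i hi => if_pos hi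
    have hlt : ∀ i : ℤ, i < 0 → (if 0 ≤ i then B else A) = A := fun i hi => if_neg (by omega)
    refine ⟨fun i => if 0 ≤ i then B else A, ?_, ?_, ?_, ?_, ?_, ?_⟩
    · intro i j hij
      dsimp only
      split_ifs
      · exact le_rfl
      · omega
      · exact hAB
      · exact le_rfl
    · intro i hi
      exact hge i (by simpa using hi)
    · intro i hi
      exact hlt i (by push_cast at hi; omega)
    · intro i x hx
      have hxB : x ∈ B := by
        dsimp only at hx
        split_ifs at hx
        · exact hx
        · exact hAB hx
      dsimp only
      split_ifs
      · exact hAB (hN1 x hxB)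
      · exact hN1 x hxB
    · intro i x hx hy
      dsimp only at hx hy ⊢
      rw [hge i (by omega)] at hx
      rw [hlt (-(i : ℤ) - 1) (by omega)] at hy
      rcases Nat.eq_zero_or_pos i with rfl | hi
      · rw [hlt _ (by simp)]
        simpa using hy
      · rw [hge _ (by omega)]
        exact hx
    · intro i y hy
      dsimp only at hy ⊢
      rw [hge i (by omega), hlt (-(i : ℤ) - 1) (by omega)]
      rcases Nat.eq_zero_or_pos i with rfl | hi
      · rw [hge _ (by simp)] at hy
        exact ⟨y, hy, by simp⟩
      · rw [hlt _ (by omega)] at hy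
        exact ⟨0, B.zero_mem, by simpa using hy⟩
  | succ d ih =>
    intro A B hAB hA hB hN
    have hApow : ∀ (n : ℕ), ∀ x ∈ A, (N ^ n) x ∈ A := by
      intro n
      induction n with
      | zero => intro x hx; simpa using hx
      | succ n ihn => intro x hx; rw [pow_succ]; exact ihn _ (hA x hx)
    have hBpow : ∀ (n : ℕ), ∀ x ∈ B, (N ^ n) x ∈ B := by
      intro n
      induction n with
      | zero => intro x hx; simpa using hx
      | succ n ihn => intro x hx; rw [pow_succ]; exact ihn _ (hB x hx)
    have hs : ∀ (n : ℕ) x, (N ^ n) (N x) = (N ^ (n + 1)) x := by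
      intro n x; rw [pow_succ]; rfl
    have hs' : ∀ (n : ℕ) x, N ((N ^ n) x) = (N ^ (n + 1)) x := by
      intro n x; rw [pow_succ']; rfl
    have hNN : ∀ x ∈ B, (N ^ (d + 1)) (N x) ∈ A := by
      intro x hx; rw [hs]; exact hN x hx
    let B' : Submodule R V := B ⊓ A.comap (N ^ (d + 1))
    let A' : Submodule R V := A ⊔ B.map (N ^ (d + 1))
    have memB' : ∀ x, x ∈ B' ↔ x ∈ B ∧ (N ^ (d + 1)) x ∈ A := fun x => Iff.rfl
    have memA' : ∀ x, x ∈ A' ↔ ∃ a ∈ A, ∃ b ∈ B, a + (N ^ (d + 1)) b = x := by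
      intro x
      simp only [A', Submodule.mem_sup, Submodule.mem_map]
      constructor
      · rintro ⟨a, ha, _, ⟨b, hb, rfl⟩, h⟩
        exact ⟨a, ha, b, hb, h⟩
      · rintro ⟨a, ha, b, hb, h⟩
        exact ⟨a, ha, _, ⟨b, hb, rfl⟩, h⟩
    have hAA' : A ≤ A' := le_sup_left
    have hB'B : B' ≤ B := inf_le_left
    have hNA' : ∀ x ∈ A', N x ∈ A := by
      intro x hx
      obtain ⟨a, ha, b, hb, rfl⟩ := (memA' x).1 hx
      rw [map_add, hs']
      exact A.add_mem (hA a ha) (hN b hb)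
    have hNB : ∀ x ∈ B, N x ∈ B' := fun x hx => (memB' _).2 ⟨hB x hx, hNN x hx⟩
    have hA'B' : A' ≤ B' := by
      intro x hx
      refine (memB' x).2 ⟨?_, ?_⟩
      · obtain ⟨a, ha, b, hb, rfl⟩ := (memA' x).1 hx
        exact B.add_mem (hAB ha) (hBpow _ b hb)
      · rw [← hs]
        exact hApow d _ (hNA' x hx)
    obtain ⟨M, mono, top, bot, step, inj, surj⟩ := ih A' B' hA'B'
      (fun x hx => hAA' (hNA' x hx)) (fun x hx => hNB x (hB'B hx))
      (fun x hx => hAA' ((memB' x).1 hx).2)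
    have hMB : ∀ i, M i ≤ B' := fun i =>
      (mono (le_max_left i (d : ℤ))).trans (top _ (le_max_right _ _)).le
    have hMA : ∀ i, A' ≤ M i := fun i =>
      (bot _ (min_le_right i (-(d : ℤ) - 1))).ge.trans (mono (min_le_left _ _))
    have key : ∃ L : ℤ → Submodule R V, (∀ i : ℤ, (d : ℤ) + 1 ≤ i → L i = B) ∧
        (∀ i : ℤ, i ≤ -(d : ℤ) - 2 → L i = A) ∧
        (∀ i : ℤ, -(d : ℤ) - 1 ≤ i → i ≤ d → L i = M i) := by
      refine ⟨fun i => if (d : ℤ) + 1 ≤ i then B else if i ≤ -(d : ℤ) - 2 then A else M i,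
        ?_, ?_, ?_⟩
      · intro i hi
        exact if_pos hi
      · intro i hi
        exact (if_neg (by omega)).trans (if_pos hi)
      · intro i hi hi'
        exact (if_neg (by omega)).trans (if_neg (by omega))
    obtain ⟨L, hLB, hLA, hLM⟩ := key
    have cases3 : ∀ i : ℤ, (d : ℤ) + 1 ≤ i ∨ i ≤ -(d : ℤ) - 2 ∨
        (-(d : ℤ) - 1 ≤ i ∧ i ≤ d) := by intro i; omega
    have hLleB : ∀ i, L i ≤ B := by
      intro i
      rcases cases3 i with h | h | ⟨h, h'⟩
      · exact (hLB i h).le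
      · rw [hLA i h]; exact hAB
      · rw [hLM i h h']; exact (hMB i).trans hB'B
    have hAleL : ∀ i, A ≤ L i := by
      intro i
      rcases cases3 i with h | h | ⟨h, h'⟩
      · rw [hLB i h]; exact hAB
      · exact (hLA i h).ge
      · rw [hLM i h h']; exact hAA'.trans (hMA i)
    refine ⟨L, ?_, ?_, ?_, ?_, ?_, ?_⟩
    · intro i j hij
      rcases cases3 j with h | h | ⟨h, h'⟩
      · rw [hLB j h]; exact hLleB i
      · rw [hLA i (by omega), hLA j h]
      · rcases cases3 i with g | g | ⟨g, g'⟩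
        · omega
        · rw [hLA i g]; exact hAleL j
        · rw [hLM i g g', hLM j h h']; exact mono hij
    · intro i hi
      exact hLB i (by push_cast at hi; omega)
    · intro i hi
      exact hLA i (by push_cast at hi; omega)
    · intro i x hx
      have hxB : x ∈ B := hLleB i hx
      rcases cases3 (i - 2) with h | h | ⟨h, h'⟩
      · rw [hLB _ h]; exact hB x hxB
      · rw [hLA _ h]
        rcases cases3 i with g | g | ⟨g, g'⟩
        · omega
        · rw [hLA i g] at hx; exact hA x hx
        · rw [hLM i g g'] at hx
          have hx2 : x ∈ M (-(d : ℤ)) := mono (by omega) hx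
          obtain ⟨z, hz, hzx⟩ := surj d x hx2
          rw [bot _ le_rfl] at hzx
          have h1 := hNA' _ hzx
          rw [map_sub, hs'] at h1
          have h2 := ((memB' z).1 (hMB _ hz)).2
          simpa using A.add_mem h1 h2
      · rw [hLM _ h h']
        rcases cases3 i with g | g | ⟨g, g'⟩
        · have h1 : N x ∈ M ((d : ℤ) - 1) := by
            apply inj d
            · rw [top _ le_rfl]; exact hNB x hxB
            · rw [bot _ le_rfl, hs]
              exact (memA' _).2 ⟨0, A.zero_mem, x, hxB, by simp⟩
          exact mono (by omega) h1
        · omega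
        · rw [hLM i g g'] at hx
          exact step i x hx
    · intro i x hx hy
      have hxB : x ∈ B := hLleB _ hx
      rcases lt_trichotomy i (d + 1) with h | h | h
      · rw [hLM _ (by omega) (by omega)] at hx hy ⊢
        exact inj i x hx hy
      · subst h
        rw [hLA _ (by push_cast; omega)] at hy
        rw [hLM _ (by push_cast; omega) (by push_cast; omega), top _ (by push_cast; omega)]
        exact (memB' x).2 ⟨hxB, hy⟩
      · rw [hLB _ (by omega)]
        exact hxB
    · intro i y hy
      rcases lt_trichotomy i (d + 1) with h | h | h
      · rw [hLM _ (by omega) (by omega)] at hy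
        rw [hLM i (by omega) (by omega), hLM _ (by omega) (by omega)]
        exact surj i y hy
      · subst h
        rw [hLM _ (by push_cast; omega) (by push_cast; omega),
          bot _ (by push_cast; omega)] at hy
        obtain ⟨a, ha, b, hb, rfl⟩ := (memA' y).1 hy
        refine ⟨b, ?_, ?_⟩
        · rw [hLB _ (by push_cast; omega)]; exact hb
        · rw [add_sub_cancel_right]; exact hAleL _ ha
      · rw [hLA _ (by omega)] at hy
        exact ⟨0, Submodule.zero_mem _, by simpa using hAleL _ hy⟩

/-- Existence of the monodromy filtration centered at `k` for a nilpotent endomorphism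
(Deligne, Weil II, 1.6). -/
theorem exists_monodromy_filtration {R V : Type*} [Ring R] [AddCommGroup V] [Module R V]
    (N : V →ₗ[R] V) (hN : IsNilpotent N) (k : ℤ) :
    ∃ M : ℤ → Submodule R V, IsMonodromyFiltration N k M := by
  obtain ⟨n, hn⟩ := hN
  have hn1 : N ^ (n + 1) = 0 := by rw [pow_succ, hn, zero_mul]
  obtain ⟨M, mono, top, bot, step, inj, surj⟩ := monodromy_aux N n ⊥ ⊤ bot_le
    (by intro x hx; rw [Submodule.mem_bot] at hx; simp [hx])
    (fun x _ => Submodule.mem_top) (by intro x _; simp [hn1])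
  refine ⟨fun i => M (i - k), ?_, ?_, ?_, ?_, ?_⟩
  · intro i j hij
    exact mono (by omega)
  · exact ⟨k - n - 1, fun i hi => bot _ (by omega)⟩
  · exact ⟨k + n, fun i hi => top _ (by omega)⟩
  · rintro i _ ⟨x, hx, rfl⟩
    have h := step _ x hx
    rwa [show i - k - 2 = i - 2 - k by ring] at h
  · intro i h1 h2
    have e1 : k + (i : ℤ) - k = i := by ring
    have e2 : k - (i : ℤ) - k = -(i : ℤ) := by ring
    have e3 : k - (i : ℤ) - 1 - k = -(i : ℤ) - 1 := by ring
    have e4 : k + (i : ℤ) - 1 - k = (i : ℤ) - 1 := by ring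
    constructor
    · rw [injective_iff_map_eq_zero]
      intro q hq
      obtain ⟨⟨x, hx⟩, rfl⟩ := Submodule.Quotient.mk_surjective _ q
      rw [Submodule.mapQ_apply, Submodule.Quotient.mk_eq_zero] at hq
      rw [Submodule.Quotient.mk_eq_zero]
      have hq' : (N ^ i) x ∈ M (k - (i : ℤ) - 1 - k) := hq
      have hx' : x ∈ M (k + (i : ℤ) - k) := hx
      change x ∈ M (k + (i : ℤ) - 1 - k)
      rw [e3] at hq'
      rw [e1] at hx'
      rw [e4]
      exact inj i x hx' hq'
    · intro q
      obtain ⟨⟨y, hy⟩, rfl⟩ := Submodule.Quotient.mk_surjective _ q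
      have hy' : y ∈ M (k - (i : ℤ) - k) := hy
      rw [e2] at hy'
      obtain ⟨x, hx, hxy⟩ := surj i y hy'
      have hx' : x ∈ M (k + (i : ℤ) - k) := by rwa [e1]
      refine ⟨Submodule.Quotient.mk ⟨x, hx'⟩, ?_⟩
      rw [Submodule.mapQ_apply, eq_comm, Submodule.Quotient.eq]
      change y - (N ^ i) x ∈ M (k - (i : ℤ) - 1 - k)
      rwa [e3]
end

section
/- Let R be a ring, V an R-module, N : V → V a nilpotent R-linear endomorphism, and k an integer. If M and M' are both monodromy filtrations of N on V centered at k, then M i = M' i for every integer i. -/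
namespace IsMonodromyFiltration

variable {R V : Type*} [Ring R] [AddCommGroup V] [Module R V]
  {N : V →ₗ[R] V} {k : ℤ} {M M' : ℤ → Submodule R V}

theorem pow_mem (hM : IsMonodromyFiltration N k M) (n : ℕ) :
    ∀ (i j : ℤ) (x : V), i - 2 * n ≤ j → x ∈ M i → (N ^ n) x ∈ M j := by
  induction n with
  | zero => intro i j x h hx; exact hM.mono (by simpa using h) (by simpa using hx)
  | succ n ih =>
    intro i j x h hx
    rw [pow_succ, Module.End.mul_apply]
    exact ih (i - 2) j (N x) (by push_cast at h; linarith)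
      (hM.map_le i (Submodule.mem_map_of_mem hx))

theorem bij (hM : IsMonodromyFiltration N k M) (i : ℕ) :
    (∀ x ∈ M (k + i), (N ^ i) x ∈ M (k - i - 1) → x ∈ M (k + i - 1)) ∧
    (∀ y ∈ M (k - i), ∃ x ∈ M (k + i), y - (N ^ i) x ∈ M (k - i - 1)) := by
  have h1 : ∀ x ∈ M (k + i), (N ^ i) x ∈ M (k - i) :=
    fun x hx => hM.pow_mem i _ _ x (by linarith) hx
  have h2 : (M (k + i - 1)).comap (M (k + i)).subtype ≤
      ((M (k - i - 1)).comap (M (k - i)).subtype).comap ((N ^ i).restrict h1) :=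
    fun x hx => hM.pow_mem i _ _ x.1 (by linarith) hx
  obtain ⟨hi, hs⟩ := hM.graded_iso i h1 h2
  constructor
  · intro x hx hN
    have h0 := (injective_iff_map_eq_zero _).1 hi (Submodule.Quotient.mk ⟨x, hx⟩) (by
      rw [Submodule.mapQ_apply, Submodule.Quotient.mk_eq_zero]
      exact hN)
    rw [Submodule.Quotient.mk_eq_zero] at h0
    exact h0
  · intro y hy
    obtain ⟨q, hq⟩ := hs (Submodule.Quotient.mk ⟨y, hy⟩)
    obtain ⟨⟨x, hx⟩, rfl⟩ := Submodule.Quotient.mk_surjective _ q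
    rw [Submodule.mapQ_apply] at hq
    have := (Submodule.Quotient.eq _).1 hq.symm
    exact ⟨x, hx, this⟩

/-- `ker N^(j+1)` is contained in `M (k+j)`. -/
theorem ker_le (hM : IsMonodromyFiltration N k M) (j : ℕ) (x : V)
    (hx : (N ^ (j + 1)) x = 0) : x ∈ M (k + j) := by
  obtain ⟨b, hb⟩ := hM.eventually_top
  have key : ∀ d : ℕ, x ∈ M (k + (j + d : ℕ)) → x ∈ M (k + j) := by
    intro d
    induction d with
    | zero => exact fun h => h
    | succ d ih =>
      intro h
      apply ih
      have := (hM.bij (j + (d + 1))).1 x h (by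
        have : (N ^ (j + (d + 1))) x = 0 := by
          rw [show j + (d + 1) = d + (j + 1) by omega, pow_add, Module.End.mul_apply, hx, map_zero]
        rw [this]; exact zero_mem _)
      exact hM.mono (by push_cast; linarith) this
  apply key (b - k).toNat
  rw [hb _ (by omega)]
  trivial

/-- `M (k-l)` is contained in `N^l (M (k+l))`. -/
theorem neg_le (hM : IsMonodromyFiltration N k M) (l : ℕ) (y : V)
    (hy : y ∈ M (k - l)) : ∃ x ∈ M (k + l), (N ^ l) x = y := by
  obtain ⟨a, ha⟩ := hM.eventually_bot
  have key : ∀ (d l : ℕ), k - a ≤ l + d → ∀ y ∈ M (k - l), ∃ x ∈ M (k + l), (N ^ l) x = y := by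
    intro d
    induction d with
    | zero =>
      intro l h y hy
      rw [ha _ (by push_cast at h; linarith), Submodule.mem_bot] at hy
      exact ⟨0, zero_mem _, by rw [hy, map_zero]⟩
    | succ d ih =>
      intro l h y hy
      obtain ⟨x, hx, hz⟩ := (hM.bij l).2 y hy
      obtain ⟨w, hw, hwz⟩ := ih (l + 1) (by push_cast at h ⊢; linarith) (y - (N ^ l) x)
        (by convert hz using 2; push_cast; ring)
      refine ⟨x + N w, add_mem hx ?_, ?_⟩
      · exact hM.mono (by push_cast; linarith) (hM.map_le _ (Submodule.mem_map_of_mem hw))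
      · rw [pow_succ, Module.End.mul_apply] at hwz
        rw [map_add, hwz]; abel
  exact key (k - a).toNat l (by omega) y hy

theorem le_of_nonneg (hM : IsMonodromyFiltration N k M) (hM' : IsMonodromyFiltration N k M')
    (j : ℕ) : M (k + j) ≤ M' (k + j) := by
  obtain ⟨b, hb⟩ := hM'.eventually_top
  have key : ∀ (d j : ℕ), b - k ≤ j + d → M (k + j) ≤ M' (k + j) := by
    intro d
    induction d with
    | zero =>
      intro j h
      rw [hb (k + j) (by push_cast at h; linarith)]
      exact le_top
    | succ d ih =>
      intro j h x hx
      obtain ⟨y, hy, hyx⟩ := hM.neg_le (j + 2) ((N ^ (j + 1)) x)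
        (hM.pow_mem _ _ _ x (by push_cast; linarith) hx)
      have hy' := ih (j + 2) (by push_cast at h ⊢; linarith) hy
      have hNy : N y ∈ M' (k + j) :=
        hM'.mono (by push_cast; linarith) (hM'.map_le _ (Submodule.mem_map_of_mem hy'))
      have hw : x - N y ∈ M' (k + j) := hM'.ker_le j _ (by
        rw [show j + 2 = (j + 1) + 1 by rfl, pow_succ, Module.End.mul_apply] at hyx
        rw [map_sub, hyx, sub_self])
      simpa using add_mem hw hNy
  exact key (b - k).toNat j (by omega)

theorem le (hM : IsMonodromyFiltration N k M) (hM' : IsMonodromyFiltration N k M')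
    (i : ℤ) : M i ≤ M' i := by
  rcases le_total k i with h | h
  · obtain ⟨j, hj⟩ := Int.eq_ofNat_of_zero_le (sub_nonneg.2 h)
    obtain rfl : i = k + j := by linarith
    exact hM.le_of_nonneg hM' j
  · obtain ⟨j, hj⟩ := Int.eq_ofNat_of_zero_le (sub_nonneg.2 h)
    obtain rfl : i = k - j := by linarith
    intro y hy
    obtain ⟨x, hx, rfl⟩ := hM.neg_le j y hy
    exact hM'.pow_mem j _ _ x (by linarith) (hM.le_of_nonneg hM' j hx)

end IsMonodromyFiltration

/-- Uniqueness of the monodromy filtration centered at `k` (Deligne, Weil II, 1.6). -/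
theorem monodromy_filtration_unique {R V : Type*} [Ring R] [AddCommGroup V] [Module R V]
    (N : V →ₗ[R] V) (hN : IsNilpotent N) (k : ℤ) (M M' : ℤ → Submodule R V)
    (hM : IsMonodromyFiltration N k M) (hM' : IsMonodromyFiltration N k M') :
    ∀ i : ℤ, M i = M' i := by
  intro i
  exact le_antisymm (hM.le hM' i) (hM'.le hM i)
end

section
/- Let R be a ring, V an R-module, N : V → V an R-linear endomorphism with N^m = 0 for some natural number m ≥ 1, k an integer, and M a monodromy filtration of N on V centered at k. Then M (k+m−1) = ⊤ and M (k−m) = ⊥. -/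
/-- Finiteness of the monodromy filtration in terms of the nilpotency index: if `N ^ m = 0`
with `m ≥ 1`, then the monodromy filtration centered at `k` satisfies `M (k + m - 1) = ⊤`
and `M (k - m) = ⊥`. -/
theorem monodromy_filtration_top_bot {R V : Type*} [Ring R] [AddCommGroup V] [Module R V]
    (N : V →ₗ[R] V) (m : ℕ) (hm : 1 ≤ m) (hN : N ^ m = 0) (k : ℤ)
    (M : ℤ → Submodule R V) (hM : IsMonodromyFiltration N k M) :
    M (k + m - 1) = ⊤ ∧ M (k - m) = ⊥ := by
  have key : ∀ i : ℕ, m ≤ i → M (k + i) ≤ M (k + i - 1) ∧ M (k - i) ≤ M (k - i - 1) := by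
    intro i hi
    have h0 : N ^ i = 0 := pow_eq_zero_of_le hi hN
    have h1 : ∀ x ∈ M (k + i), (N ^ i) x ∈ M (k - i) := by
      intro x _
      rw [h0]
      exact Submodule.zero_mem _
    have h2 : (M (k + i - 1)).comap (M (k + i)).subtype ≤
        ((M (k - i - 1)).comap (M (k - i)).subtype).comap ((N ^ i).restrict h1) := by
      intro x _
      simp [h0]
    obtain ⟨hinj, hsurj⟩ := hM.graded_iso i h1 h2
    have hz : ∀ x : M (k + i), (N ^ i).restrict h1 x = 0 := by
      intro x
      apply Subtype.ext
      simp [h0]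
    constructor
    · intro x hx
      have h := hinj (a₁ := Submodule.Quotient.mk ⟨x, hx⟩) (a₂ := 0) (by
        rw [map_zero, Submodule.mapQ_apply, hz, Submodule.Quotient.mk_zero])
      rw [Submodule.Quotient.mk_eq_zero] at h
      exact h
    · intro y hy
      obtain ⟨q, hq⟩ := hsurj (Submodule.Quotient.mk ⟨y, hy⟩)
      obtain ⟨x, rfl⟩ := Submodule.Quotient.mk_surjective _ q
      rw [Submodule.mapQ_apply, hz, Submodule.Quotient.mk_zero] at hq
      have h := (Submodule.Quotient.mk_eq_zero _).1 hq.symm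
      exact h
  have top : ∀ n : ℕ, M (k + m - 1 + n) ≤ M (k + m - 1) := by
    intro n
    induction n with
    | zero => simp
    | succ n ih =>
      have h := (key (m + n) (by omega)).1
      refine le_trans ?_ ih
      convert h using 2 <;> push_cast <;> ring
  have bot : ∀ n : ℕ, M (k - m) ≤ M (k - m - n) := by
    intro n
    induction n with
    | zero => simp
    | succ n ih =>
      have h := (key (m + n) (by omega)).2
      refine le_trans ih ?_
      convert h using 2 <;> push_cast <;> ring
  obtain ⟨a, ha⟩ := hM.eventually_bot
  obtain ⟨b, hb⟩ := hM.eventually_top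
  constructor
  · have h := top (b - (k + m - 1)).toNat
    rw [hb _ (by omega)] at h
    exact top_le_iff.1 h
  · have h := bot (k - m - a).toNat
    rw [ha (k - m - (k - m - a).toNat) (by omega)] at h
    exact le_bot_iff.1 h
end

section
/- Let R be a ring, V an R-module, N : V → V a nilpotent R-linear endomorphism, k an integer, and M a monodromy filtration of N on V centered at k. Then the kernel of N is contained in M k. (This is the abstract form of the statement in Section 3.2(i) of the paper: with respect to the monodromy filtration centered at k, the kernel of N has weights at most k.) -/
/-- With respect to the monodromy filtration centered at `k`, the kernel of `N` has weights
at most `k`: `ker N ≤ M k`. -/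
theorem ker_le_monodromy_filtration {R V : Type*} [Ring R] [AddCommGroup V] [Module R V]
    (N : V →ₗ[R] V) (hN : IsNilpotent N) (k : ℤ)
    (M : ℤ → Submodule R V) (hM : IsMonodromyFiltration N k M) :
    LinearMap.ker N ≤ M k := by
  have hpow : ∀ (i : ℕ) (j : ℤ) (x : V), x ∈ M j → (N ^ i) x ∈ M (j - 2 * i) := by
    intro i
    induction i with
    | zero => intro j x hx; simpa using hx
    | succ n ih =>
      intro j x hx
      have h := hM.map_le _ (Submodule.mem_map_of_mem (f := N) (ih j x hx))
      rw [pow_succ', Module.End.mul_apply]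
      have e : j - 2 * ((n + 1 : ℕ) : ℤ) = j - 2 * (n : ℤ) - 2 := by push_cast; ring
      rw [e]
      exact h
  intro x hx
  have hx0 : N x = 0 := hx
  have key : ∀ n : ℕ, x ∈ M (k + n) → x ∈ M k := by
    intro n
    induction n with
    | zero => intro h; simpa using h
    | succ n ih =>
      intro h
      apply ih
      have h1 : ∀ y ∈ M (k + (n + 1 : ℕ)), (N ^ (n + 1)) y ∈ M (k - (n + 1 : ℕ)) := by
        intro y hy
        have := hpow (n + 1) _ y hy
        have e : k + ((n + 1 : ℕ) : ℤ) - 2 * ((n + 1 : ℕ) : ℤ) = k - (n + 1 : ℕ) := by ring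
        rwa [e] at this
      have h2 : (M (k + (n + 1 : ℕ) - 1)).comap (M (k + (n + 1 : ℕ))).subtype ≤
          ((M (k - (n + 1 : ℕ) - 1)).comap (M (k - (n + 1 : ℕ))).subtype).comap
            ((N ^ (n + 1)).restrict h1) := by
        intro y hy
        have := hpow (n + 1) _ _ (show (y : V) ∈ M (k + (n + 1 : ℕ) - 1) from hy)
        have e : k + ((n + 1 : ℕ) : ℤ) - 1 - 2 * ((n + 1 : ℕ) : ℤ) = k - (n + 1 : ℕ) - 1 := by
          ring
        rw [e] at this
        exact this
      have hinj := (hM.graded_iso (n + 1) h1 h2).1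
      have hz : (N ^ (n + 1)).restrict h1 ⟨x, h⟩ = 0 := by
        apply Subtype.ext
        change (N ^ (n + 1)) x = 0
        rw [pow_succ, Module.End.mul_apply, hx0, map_zero]
      have hq := (injective_iff_map_eq_zero _).1 hinj (Submodule.Quotient.mk ⟨x, h⟩) (by
        rw [Submodule.mapQ_apply, hz, Submodule.Quotient.mk_zero])
      have hm : x ∈ M (k + (n + 1 : ℕ) - 1) := by
        have := (Submodule.Quotient.mk_eq_zero _).1 hq
        exact this
      have e : k + ((n + 1 : ℕ) : ℤ) - 1 = k + n := by push_cast; ring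
      rwa [e] at hm
  obtain ⟨b, hb⟩ := hM.eventually_top
  apply key (b - k).toNat
  rw [hb _ (by omega)]
  trivial
end

section
/- Let R be a ring, V an R-module, N : V → V a nilpotent R-linear endomorphism, k an integer, and M a monodromy filtration of N on V centered at k. Then M (k−1) is contained in the range of N. (This is the abstract form of the statement in Section 3.2(ii) of the paper: with respect to the monodromy filtration centered at k, the cokernel of N : V → V(−1) has weights at least k+2, where the Tate twist shifts the filtration up by 2.) -/
theorem IsMonodromyFiltration.pow_mem_s5 {R V : Type*} [Ring R] [AddCommGroup V] [Module R V]
    {N : V →ₗ[R] V} {k : ℤ} {M : ℤ → Submodule R V} (hM : IsMonodromyFiltration N k M)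
    (n : ℕ) : ∀ (j : ℤ) (x : V), x ∈ M j → (N ^ n) x ∈ M (j - 2 * n) := by
  induction n with
  | zero => intro j x hx; simpa using hx
  | succ n ih =>
    intro j x hx
    have h := hM.map_le _ (Submodule.mem_map_of_mem (ih j x hx))
    rw [pow_succ', Module.End.mul_apply]
    convert h using 2
    push_cast
    ring

theorem IsMonodromyFiltration.exists_sub_mem {R V : Type*} [Ring R] [AddCommGroup V]
    [Module R V] {N : V →ₗ[R] V} {k : ℤ} {M : ℤ → Submodule R V}
    (hM : IsMonodromyFiltration N k M) (i : ℕ) (x : V) (hx : x ∈ M (k - i)) :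
    ∃ y : V, x - (N ^ i) y ∈ M (k - i - 1) := by
  have h1 : ∀ x ∈ M (k + i), (N ^ i) x ∈ M (k - i) := fun x hx => by
    have h := hM.pow_mem_s5 i _ x hx
    convert h using 2
    ring
  have h2 : (M (k + i - 1)).comap (M (k + i)).subtype ≤
        ((M (k - i - 1)).comap (M (k - i)).subtype).comap ((N ^ i).restrict h1) := by
    intro y hy
    have h := hM.pow_mem_s5 i _ (y : V) hy
    change (N ^ i) (y : V) ∈ M (k - i - 1)
    convert h using 2
    ring
  obtain ⟨q, hq⟩ := (hM.graded_iso i h1 h2).2 (Submodule.Quotient.mk ⟨x, hx⟩)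
  obtain ⟨y, rfl⟩ := Submodule.Quotient.mk_surjective _ q
  rw [Submodule.mapQ_apply] at hq
  have h := (Submodule.Quotient.eq _).1 hq.symm
  exact ⟨y, h⟩

/-- With respect to the monodromy filtration centered at `k`, the part of the filtration of
weight at most `k - 1` is contained in the image of `N`: `M (k - 1) ≤ range N`. -/
theorem monodromy_filtration_le_range {R V : Type*} [Ring R] [AddCommGroup V] [Module R V]
    (N : V →ₗ[R] V) (hN : IsNilpotent N) (k : ℤ)
    (M : ℤ → Submodule R V) (hM : IsMonodromyFiltration N k M) :
    M (k - 1) ≤ LinearMap.range N := by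
  obtain ⟨a, ha⟩ := hM.eventually_bot
  have key : ∀ (m i : ℕ), 1 ≤ i → k - i - m ≤ a → M (k - i) ≤ LinearMap.range N := by
    intro m
    induction m with
    | zero =>
      intro i _ h
      rw [ha _ (by simpa using h)]
      exact bot_le
    | succ m ih =>
      intro i hi h x hx
      obtain ⟨y, hy⟩ := hM.exists_sub_mem i x hx
      have h3 := ih (i + 1) (by omega) (by push_cast at h ⊢; omega)
      have h4 : x - (N ^ i) y ∈ LinearMap.range N := by
        apply h3
        convert hy using 2
        push_cast
        ring
      have h5 : (N ^ i) y ∈ LinearMap.range N := by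
        obtain ⟨j, rfl⟩ : ∃ j, i = j + 1 := ⟨i - 1, by omega⟩
        rw [pow_succ', Module.End.mul_apply]
        exact LinearMap.mem_range_self _ _
      simpa using add_mem h4 h5
  have h := key (k - 1 - a).toNat 1 le_rfl (by push_cast; omega)
  simpa using h
end

section
/- Let R be a ring and let A, B, C, C', D be R-modules, where B, C and D are each equipped with an increasing ℤ-indexed filtration (denoted W in all cases). Let α : A → B, β : B → C, ν : C → C', δ : B → D be R-linear maps, with β strictly compatible with the filtrations on B and C, and δ compatible with the filtrations on B and D. Fix an integer k and assume: (1) range β = ker ν; (2) range α = ker δ; (3) ker ν ≤ W k (as submodules of C); (4) W k = ⊥ (as a submodule of D). Then ker ν = range (β ∘ α); in other words, the sequence A → C → C' given by β ∘ α followed by ν is exact at C. (This is the weight-theoretic diagram lemma underlying the proof of Proposition 1 (local invariant cycles) of the paper, where A, B, C, C', D are H^k(X_0; i^*M), H^k(X_0; i^*j_*j^*M), H^k(X_0; ψ_f^u M), H^k(X_0; ψ_f^u M)(−1), H^{k+1}(X_0; i^!M) with their weight filtrations, ν is the log of monodromy N, and morphisms of mixed Hodge structures are strictly compatible with weight filtrations.)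 -/
/-- Weight-theoretic diagram lemma underlying Proposition 1 (local invariant cycles):
given exact rows/columns and weight bounds, `ker ν = range (β ∘ α)`.
Here `WB`, `WC`, `WD` are increasing `ℤ`-indexed filtrations on `B`, `C`, `D`;
`β` is strictly compatible and `δ` is compatible with the filtrations. -/
theorem ker_eq_range_comp_of_weights {R A B C C' D : Type*} [Ring R]
    [AddCommGroup A] [Module R A] [AddCommGroup B] [Module R B]
    [AddCommGroup C] [Module R C] [AddCommGroup C'] [Module R C']
    [AddCommGroup D] [Module R D]
    (WB : ℤ → Submodule R B) (WC : ℤ → Submodule R C) (WD : ℤ → Submodule R D)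
    (hWB : Monotone WB) (hWC : Monotone WC) (hWD : Monotone WD)
    (α : A →ₗ[R] B) (β : B →ₗ[R] C) (ν : C →ₗ[R] C') (δ : B →ₗ[R] D)
    (hβ : ∀ i : ℤ, (WB i).map β = LinearMap.range β ⊓ WC i)
    (hδ : ∀ i : ℤ, (WB i).map δ ≤ WD i)
    (k : ℤ)
    (h1 : LinearMap.range β = LinearMap.ker ν)
    (h2 : LinearMap.range α = LinearMap.ker δ)
    (h3 : LinearMap.ker ν ≤ WC k)
    (h4 : WD k = ⊥) :
    LinearMap.ker ν = LinearMap.range (β.comp α) := by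
  apply le_antisymm
  · intro c hc
    have hm : c ∈ (WB k).map β := by
      rw [hβ k]
      exact ⟨h1 ▸ hc, h3 hc⟩
    obtain ⟨b, hb, rfl⟩ := hm
    have hd : δ b ∈ WD k := hδ k ⟨b, hb, rfl⟩
    rw [h4, Submodule.mem_bot] at hd
    have hr : b ∈ LinearMap.range α := by
      rw [h2]
      exact hd
    obtain ⟨a, rfl⟩ := hr
    exact ⟨a, rfl⟩
  · rw [← h1]
    exact LinearMap.range_comp_le_range α β
end

section
/- Let R be a ring and let C, C', E, F, G be R-modules, where C', E and F are each equipped with an increasing ℤ-indexed filtration (denoted W in all cases). Let ν : C → C', μ : C' → E, φ : F → E, ψ : E → G be R-linear maps, with μ strictly compatible with the filtrations on C' and E, and φ compatible with the filtrations on F and E. Fix an integer k and assume: (1) range ν = ker μ; (2) range φ = ker ψ; (3) W (k+1) ≤ range ν (as submodules of C'); (4) W (k+1) = ⊤ (as a submodule of F). Then ker (ψ ∘ μ) = range ν; in other words, the sequence C → C' → G given by ν followed by ψ ∘ μ is exact at C'. (This is the weight-theoretic diagram lemma underlying the proof of Proposition 2 of the paper, where C, C', E, F, G are H^k(X_0;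 ψ_f^u M), H^k(X_0; ψ_f^u M)(−1), H^{k+1}(X_0; i^*j_*j^*M), H^{k+1}(X_0; i^*M), H^{k+2}(X_0; i^!M) with their weight filtrations, ν is the log of monodromy N, and morphisms of mixed Hodge structures are strictly compatible with weight filtrations.) -/
/-- Weight-theoretic diagram lemma underlying Proposition 2 of the paper:
given exact rows/columns and weight bounds, `ker (ψ ∘ μ) = range ν`.
Here `WC'`, `WE`, `WF` are increasing `ℤ`-indexed filtrations on `C'`, `E`, `F`;
`μ` is strictly compatible and `φ` is compatible with the filtrations. -/
theorem ker_comp_eq_range_of_weights {R C C' E F G : Type*} [Ring R]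
    [AddCommGroup C] [Module R C] [AddCommGroup C'] [Module R C']
    [AddCommGroup E] [Module R E] [AddCommGroup F] [Module R F]
    [AddCommGroup G] [Module R G]
    (WC' : ℤ → Submodule R C') (WE : ℤ → Submodule R E) (WF : ℤ → Submodule R F)
    (hWC' : Monotone WC') (hWE : Monotone WE) (hWF : Monotone WF)
    (ν : C →ₗ[R] C') (μ : C' →ₗ[R] E) (φ : F →ₗ[R] E) (ψ : E →ₗ[R] G)
    (hμ : ∀ i : ℤ, (WC' i).map μ = LinearMap.range μ ⊓ WE i)
    (hφ : ∀ i : ℤ, (WF i).map φ ≤ WE i)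
    (k : ℤ)
    (h1 : LinearMap.range ν = LinearMap.ker μ)
    (h2 : LinearMap.range φ = LinearMap.ker ψ)
    (h3 : WC' (k + 1) ≤ LinearMap.range ν)
    (h4 : WF (k + 1) = ⊤) :
    LinearMap.ker (ψ.comp μ) = LinearMap.range ν := by
  apply le_antisymm
  · intro x hx
    have hx' : μ x ∈ LinearMap.ker ψ := hx
    rw [← h2] at hx'
    obtain ⟨f, hf⟩ := hx'
    have hE : μ x ∈ WE (k + 1) := by
      apply hφ (k + 1)
      exact ⟨f, by rw [h4]; exact Submodule.mem_top, hf⟩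
    have hm : μ x ∈ (WC' (k + 1)).map μ := by
      rw [hμ]
      exact ⟨⟨x, rfl⟩, hE⟩
    obtain ⟨y, hy, hyx⟩ := hm
    have hy0 : μ y = 0 := by
      have := h3 hy
      rw [h1] at this
      exact this
    rw [h1, LinearMap.mem_ker, ← hyx]
    exact hy0
  · intro x hx
    rw [h1, LinearMap.mem_ker] at hx
    simp [hx]
end

section
/- Let R be a ring and let C', E, C₁, C₁', G, G₂ be R-modules, where E, C₁ and G are each equipped with an increasing ℤ-indexed filtration (denoted W in all cases). Let u : C' → E, v : E → C₁, t : C₁ → C₁', φ : E → G, χ : G → G₂ be R-linear maps, with v strictly compatible with the filtrations on E and C₁, and φ compatible with the filtrations on E and G. Fix an integer k and assume: (1) ker v = range u; (2) range v ≤ ker t; (3) ker t ≤ W (k+1) (as submodules of C₁); (4) ker χ = range φ; (5) W (k+1) = ⊥ (as a submodule of G). Then ker χ = range (φ ∘ u); in other words, the sequence C' → G → G₂ given by φ ∘ u followed by χ is exact at G. (This is the weight-theoretic diagram lemma underlying the proof of Proposition 3 of the paper, where C', E, C₁, C₁', G, G₂ are H^k(X_0; ψ_f^u M)(−1), H^{k+1}(X_0;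 i^*j_*j^*M), H^{k+1}(X_0; ψ_f^u M), H^{k+1}(X_0; ψ_f^u M)(−1), H^{k+2}(X_0; i^!M), H^{k+2}(X_0; i^*M) with their weight filtrations, t is the log of monodromy N, and morphisms of mixed Hodge structures are strictly compatible with weight filtrations.) -/
/-- Weight-theoretic diagram lemma underlying Proposition 3 of the paper:
given exact rows/columns and weight bounds, `ker χ = range (φ ∘ u)`.
Here `WE`, `WC₁`, `WG` are increasing `ℤ`-indexed filtrations on `E`, `C₁`, `G`;
`v` is strictly compatible and `φ` is compatible with the filtrations. -/
theorem ker_eq_range_comp_of_weights' {R C' E C₁ C₁' G G₂ : Type*} [Ring R]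
    [AddCommGroup C'] [Module R C'] [AddCommGroup E] [Module R E]
    [AddCommGroup C₁] [Module R C₁] [AddCommGroup C₁'] [Module R C₁']
    [AddCommGroup G] [Module R G] [AddCommGroup G₂] [Module R G₂]
    (WE : ℤ → Submodule R E) (WC₁ : ℤ → Submodule R C₁) (WG : ℤ → Submodule R G)
    (hWE : Monotone WE) (hWC₁ : Monotone WC₁) (hWG : Monotone WG)
    (u : C' →ₗ[R] E) (v : E →ₗ[R] C₁) (t : C₁ →ₗ[R] C₁') (φ : E →ₗ[R] G) (χ : G →ₗ[R] G₂)
    (hv : ∀ i : ℤ, (WE i).map v = LinearMap.range v ⊓ WC₁ i)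
    (hφ : ∀ i : ℤ, (WE i).map φ ≤ WG i)
    (k : ℤ)
    (h1 : LinearMap.ker v = LinearMap.range u)
    (h2 : LinearMap.range v ≤ LinearMap.ker t)
    (h3 : LinearMap.ker t ≤ WC₁ (k + 1))
    (h4 : LinearMap.ker χ = LinearMap.range φ)
    (h5 : WG (k + 1) = ⊥) :
    LinearMap.ker χ = LinearMap.range (φ.comp u) := by
  rw [h4]
  apply le_antisymm
  · rintro _ ⟨e, rfl⟩
    have hmem : v e ∈ (WE (k + 1)).map v := by
      rw [hv]
      exact ⟨⟨e, rfl⟩, h3 (h2 ⟨e, rfl⟩)⟩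
    obtain ⟨w, hw, hwe⟩ := hmem
    have hφw : φ w = 0 := by
      have h := hφ (k + 1) ⟨w, hw, rfl⟩
      rw [h5] at h
      exact (Submodule.mem_bot R).1 h
    have hker : e - w ∈ LinearMap.ker v := by
      rw [LinearMap.mem_ker, map_sub, hwe, sub_self]
    rw [h1] at hker
    obtain ⟨c, hc⟩ := hker
    refine ⟨c, ?_⟩
    rw [LinearMap.comp_apply, hc, map_sub, hφw, sub_zero]
  · rintro _ ⟨c, rfl⟩
    exact ⟨u c, rfl⟩
end

section
/- Let R be a ring and let A, B, E, C, C₀, C₀' be R-modules, where B, C₀' and E are each equipped with an increasing ℤ-indexed filtration (denoted W in all cases). Let α : A → B, β : B → E, γ : E → C, η : C₀ → C₀', δ : C₀' → E be R-linear maps, with δ strictly compatible with the filtrations on C₀' and E, and β compatible with the filtrations on B and E. Fix an integer k and assume: (1) ker β = range α; (2) ker γ = range δ; (3) ker δ = range η; (4) W k = ⊤ (as a submodule of B); (5) W k ≤ range η (as submodules of C₀'). Then ker (γ ∘ β) = range α; in other words, the sequence A → B → C given by α followed by γ ∘ β is exact at B. (This is the weight-theoretic diagram lemma underlying the proof of Proposition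 4 of the paper, where A, B, E, C, C₀, C₀' are H^k(X_0; i^!M), H^k(X_0; i^*M), H^k(X_0; i^*j_*j^*M), H^k(X_0; ψ_f^u M), H^{k−1}(X_0; ψ_f^u M), H^{k−1}(X_0; ψ_f^u M)(−1) with their weight filtrations, η is the log of monodromy N, and morphisms of mixed Hodge structures are strictly compatible with weight filtrations.) -/
/-- Weight-theoretic diagram lemma underlying Proposition 4 of the paper:
given exact rows/columns and weight bounds, `ker (γ ∘ β) = range α`.
Here `WB`, `WC₀'`, `WE` are increasing `ℤ`-indexed filtrations on `B`, `C₀'`, `E`;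
`δ` is strictly compatible and `β` is compatible with the filtrations. -/
theorem ker_comp_eq_range_of_weights' {R A B E C C₀ C₀' : Type*} [Ring R]
    [AddCommGroup A] [Module R A] [AddCommGroup B] [Module R B]
    [AddCommGroup E] [Module R E] [AddCommGroup C] [Module R C]
    [AddCommGroup C₀] [Module R C₀] [AddCommGroup C₀'] [Module R C₀']
    (WB : ℤ → Submodule R B) (WC₀' : ℤ → Submodule R C₀') (WE : ℤ → Submodule R E)
    (hWB : Monotone WB) (hWC₀' : Monotone WC₀') (hWE : Monotone WE)
    (α : A →ₗ[R] B) (β : B →ₗ[R] E) (γ : E →ₗ[R] C) (η : C₀ →ₗ[R] C₀') (δ : C₀' →ₗ[R] E)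
    (hδ : ∀ i : ℤ, (WC₀' i).map δ = LinearMap.range δ ⊓ WE i)
    (hβ : ∀ i : ℤ, (WB i).map β ≤ WE i)
    (k : ℤ)
    (h1 : LinearMap.ker β = LinearMap.range α)
    (h2 : LinearMap.ker γ = LinearMap.range δ)
    (h3 : LinearMap.ker δ = LinearMap.range η)
    (h4 : WB k = ⊤)
    (h5 : WC₀' k ≤ LinearMap.range η) :
    LinearMap.ker (γ.comp β) = LinearMap.range α := by
  rw [← h1]
  ext b
  constructor
  · intro hb
    have hγ : β b ∈ LinearMap.ker γ := hb
    rw [h2] at hγ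
    have hW : β b ∈ WE k := hβ k (Submodule.mem_map_of_mem (by rw [h4]; exact Submodule.mem_top))
    have hm : β b ∈ (WC₀' k).map δ := by
      rw [hδ k]
      exact ⟨hγ, hW⟩
    obtain ⟨c, hc, hcb⟩ := hm
    have hc0 : c ∈ LinearMap.ker δ := by
      rw [h3]
      exact h5 hc
    rw [LinearMap.mem_ker] at hc0 ⊢
    rw [← hcb]
    exact hc0
  · intro hb
    rw [LinearMap.mem_ker] at hb ⊢
    rw [LinearMap.comp_apply, hb, map_zero]
end

section
/- Let R be a ring, let E and C₁ be R-modules each equipped with an increasing ℤ-indexed filtration W, and let v : E → C₁ be an R-linear map that is strictly compatible with the filtrations. Fix an integer j and assume range v ≤ W j (as submodules of C₁). Then ker v ⊔ W j = ⊤ as submodules of E, i.e. every element of E is the sum of an element of the kernel of v and an element of W j. (This is the intermediate claim in the proof of Proposition 3 of the paper that a map of mixed Hodge structures whose image has weights at most j is zero on weights greater than j, so that exactness yields surjectivity on weights greater than j.) -/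
/-- If `v : E → C₁` is strictly compatible with increasing `ℤ`-indexed filtrations `WE`, `WC₁`
and its range is contained in `WC₁ j`, then `ker v ⊔ WE j = ⊤`: every element of `E` is the
sum of an element of the kernel of `v` and an element of `WE j`. -/
theorem ker_sup_filtration_eq_top_of_range_le {R E C₁ : Type*} [Ring R]
    [AddCommGroup E] [Module R E] [AddCommGroup C₁] [Module R C₁]
    (WE : ℤ → Submodule R E) (WC₁ : ℤ → Submodule R C₁)
    (hWE : Monotone WE) (hWC₁ : Monotone WC₁)
    (v : E →ₗ[R] C₁)
    (hv : ∀ i : ℤ, (WE i).map v = LinearMap.range v ⊓ WC₁ i)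
    (j : ℤ)
    (h : LinearMap.range v ≤ WC₁ j) :
    LinearMap.ker v ⊔ WE j = ⊤ := by
  rw [eq_top_iff]
  intro x _
  have hx : v x ∈ (WE j).map v := by
    rw [hv j]
    exact ⟨⟨x, rfl⟩, h ⟨x, rfl⟩⟩
  obtain ⟨w, hw, hwx⟩ := hx
  refine Submodule.mem_sup.mpr ⟨x - w, ?_, w, hw, sub_add_cancel x w⟩
  rw [LinearMap.mem_ker, map_sub, hwx, sub_self]
end
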